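/- arXiv:2605.15234 — 2 statements merged into one kernel-verified Lean document; each statement's English description precedes it below -/
import Mathlib

section
/- Let Σ_X ∈ M_N(ℝ) be symmetric positive definite and Σ_ξ ∈ M_N(ℝ) symmetric positive semidefinite, let X and ξ be independent ℝ^N-valued centered Gaussian random vectors with covariances Σ_X and Σ_ξ respectively, and let G ∈ M_N(ℂ) be arbitrary. Define the random matrix c := X·(Xᵀ G − ξᵀ) ∈ M_N(ℂ) and C := 𝔼[c] = Σ_X G. Then for every Hermitian Q ∈ M_N(ℂ), 𝔼[ c* Q c ] − C* Q C = tr(Σ_X Q)·( G* Σ_X G + Σ_ξ ) + G* Σ_X Qᵀ Σ_X G, where Qᵀ is the transpose of Q without conjugation. -/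
open Matrix MeasureTheory ProbabilityTheory

noncomputable section

variable {n : ℕ} {Θ : Type*} [MeasurableSpace Θ]

/-- `X` is a centered Gaussian random vector with covariance `S`: its law is the pushforward
of a standard Gaussian by a matrix square root of `S`. -/
def IsCenteredGaussian (P : Measure Θ) (X : Θ → Fin n → ℝ)
    (S : Matrix (Fin n) (Fin n) ℝ) : Prop :=
  ∃ A : Matrix (Fin n) (Fin n) ℝ, A * Aᵀ = S ∧
    Measure.map X P =
      Measure.map (fun z => A *ᵥ z) (Measure.pi fun _ : Fin n => gaussianReal 0 1)

/-- `f` is integrable with integral `v`. -/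
def HasE {𝕜 : Type*} [RCLike 𝕜] {Ω : Type*} [MeasurableSpace Ω] (P : Measure Ω) (f : Ω → 𝕜) (v : 𝕜) : Prop :=
  Integrable f P ∧ ∫ x, f x ∂P = v

namespace HasE
variable {𝕜 : Type*} [RCLike 𝕜] {Ω : Type*} [MeasurableSpace Ω] {P : Measure Ω}

lemma sum {ι : Type*} (s : Finset ι) {f : ι → Ω → 𝕜} {v : ι → 𝕜} (h : ∀ i, HasE P (f i) (v i)) :
    HasE P (fun x => ∑ i ∈ s, f i x) (∑ i ∈ s, v i) := by
  refine ⟨integrable_finsetSum _ fun i _ => (h i).1, ?_⟩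
  rw [integral_finsetSum _ fun i _ => (h i).1]
  exact Finset.sum_congr rfl fun i _ => (h i).2

lemma const_mul {f : Ω → 𝕜} {v : 𝕜} (c : 𝕜) (h : HasE P f v) : HasE P (fun x => c * f x) (c * v) :=
  ⟨h.1.const_mul c, by rw [integral_const_mul, h.2]⟩

lemma add {f g : Ω → 𝕜} {v w : 𝕜} (h : HasE P f v) (h' : HasE P g w) :
    HasE P (fun x => f x + g x) (v + w) :=
  ⟨h.1.add h'.1, by rw [integral_add h.1 h'.1, h.2, h'.2]⟩

lemma sub {f g : Ω → 𝕜} {v w : 𝕜} (h : HasE P f v) (h' : HasE P g w) :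
    HasE P (fun x => f x - g x) (v - w) :=
  ⟨h.1.sub h'.1, by rw [integral_sub h.1 h'.1, h.2, h'.2]⟩

lemma congr {f g : Ω → 𝕜} {v w : 𝕜} (h : HasE P f v) (hf : ∀ x, g x = f x) (hv : w = v) :
    HasE P g w := by
  have : g = f := funext hf
  subst this hv; exact h

lemma ofReal {f : Ω → ℝ} {v : ℝ} (h : HasE P f v) : HasE P (fun x => (f x : ℂ)) (v : ℂ) :=
  ⟨h.1.ofReal, by rw [integral_complex_ofReal, h.2]⟩
end HasE

lemma gauss_int (k : ℕ) : Integrable (fun x : ℝ => x ^ k) (gaussianReal 0 1) := by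
  have h := memLp_id_gaussianReal (μ := 0) (v := 1) (k : NNReal)
  rcases Nat.eq_zero_or_pos k with rfl | hk
  · simp
  · have := h.integrable_norm_pow (p := k) (by omega)
    refine this.mono (by fun_prop) ?_
    filter_upwards with x
    simp

lemma gauss_mom (k : ℕ) : ∫ x, x ^ k ∂(gaussianReal 0 1) =
    iteratedDeriv k (fun t : ℝ => Real.exp (t ^ 2 / 2)) 0 := by
  have h := iteratedDeriv_mgf_zero (X := id) (μ := gaussianReal 0 1) (by simp) k
  rw [mgf_id_gaussianReal] at h
  simp at h
  rw [h]

lemma hd0 (t : ℝ) : HasDerivAt (fun t : ℝ => Real.exp (t ^ 2 / 2)) (t * Real.exp (t ^ 2 / 2)) t := by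
  have := (((hasDerivAt_id t).pow 2).div_const 2).exp
  refine this.congr_deriv ?_
  simp; ring

lemma hd (p : ℝ → ℝ) (t p' : ℝ) (hp : HasDerivAt p p' t) :
    deriv (fun t : ℝ => p t * Real.exp (t ^ 2 / 2)) t = (p' + t * p t) * Real.exp (t ^ 2 / 2) := by
  have h : HasDerivAt (fun t : ℝ => p t * Real.exp (t ^ 2 / 2)) _ t := hp.mul (hd0 t)
  rw [h.deriv]; ring

lemma dd1 : deriv (fun t : ℝ => Real.exp (t ^ 2 / 2)) = fun t => t * Real.exp (t ^ 2 / 2) :=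
  funext fun t => (hd0 t).deriv
lemma dd2 : deriv (fun t : ℝ => t * Real.exp (t ^ 2 / 2)) =
    fun t => (1 + t ^ 2) * Real.exp (t ^ 2 / 2) := by
  funext t; rw [hd (fun t => t) t 1 (hasDerivAt_id t)]; ring
lemma dd3 : deriv (fun t : ℝ => (1 + t ^ 2) * Real.exp (t ^ 2 / 2)) =
    fun t => (3 * t + t ^ 3) * Real.exp (t ^ 2 / 2) := by
  funext t
  rw [hd (fun t => 1 + t ^ 2) t (2 * t) (by simpa using ((hasDerivAt_id t).pow 2).const_add 1)]; ring
lemma dd4 : deriv (fun t : ℝ => (3 * t + t ^ 3) * Real.exp (t ^ 2 / 2)) =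
    fun t => (3 + 6 * t ^ 2 + t ^ 4) * Real.exp (t ^ 2 / 2) := by
  funext t
  rw [hd (fun t => 3 * t + t ^ 3) t (3 + 3 * t ^ 2)
    (by
      have h : HasDerivAt (fun t : ℝ => 3 * t + t ^ 3) _ t :=
        ((hasDerivAt_id t).const_mul 3).add ((hasDerivAt_id t).pow 3)
      exact h.congr_deriv (by simp))]
  ring

/-- the moments -/
def gm (k : ℕ) : ℝ := ∫ x, x ^ k ∂(gaussianReal 0 1)
lemma gm0 : gm 0 = 1 := by simp [gm]
lemma gm1 : gm 1 = 0 := by simp [gm]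
lemma gm2 : gm 2 = 1 := by
  rw [gm, gauss_mom, iteratedDeriv_succ', iteratedDeriv_one, dd1, dd2]; simp
lemma gm3 : gm 3 = 0 := by
  rw [gm, gauss_mom, iteratedDeriv_succ', iteratedDeriv_succ', iteratedDeriv_one, dd1, dd2, dd3]; simp
lemma gm4 : gm 4 = 3 := by
  rw [gm, gauss_mom, iteratedDeriv_succ', iteratedDeriv_succ', iteratedDeriv_succ', iteratedDeriv_one,
    dd1, dd2, dd3, dd4]; simp

/-- standard gaussian -/
abbrev stdG (n : ℕ) : Measure (Fin n → ℝ) := Measure.pi fun _ : Fin n => gaussianReal 0 1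

lemma mono_E (e : Fin n → ℕ) : HasE (stdG n) (fun z => ∏ m, z m ^ e m) (∏ m, gm (e m)) :=
  ⟨Integrable.fintype_prod (f := fun m x => x ^ e m) fun i => gauss_int _,
    integral_fintype_prod_eq_prod (fun m x => x ^ e m)⟩

/-- indicator -/
def dl (i j : Fin n) : ℕ := if j = i then 1 else 0

lemma prod_dl (z : Fin n → ℝ) (i : Fin n) : ∏ m, z m ^ dl i m = z i := by
  simp [dl, pow_ite]

lemma z1 (i : Fin n) : HasE (stdG n) (fun z => z i) 0 := by
  refine (mono_E (dl i)).congr (fun z => (prod_dl z i).symm) ?_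
  symm
  exact Finset.prod_eq_zero (Finset.mem_univ i) (by simp [dl, gm1])

lemma z2 (i j : Fin n) : HasE (stdG n) (fun z => z i * z j) (if i = j then 1 else 0) := by
  refine (mono_E (fun m => dl i m + dl j m)).congr (fun z => ?_) ?_
  · simp only [pow_add, Finset.prod_mul_distrib, prod_dl]
  · split_ifs with h
    · subst h
      symm; apply Finset.prod_eq_one
      intro m _
      by_cases hm : m = i <;> simp [dl, hm, gm0, gm2]
    · symm
      exact Finset.prod_eq_zero (Finset.mem_univ i) (by simp [dl, h, gm1])

lemma z3 (i j k : Fin n) : Integrable (fun z => z i * z j * z k) (stdG n) := by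
  refine ((mono_E (fun m => dl i m + dl j m + dl k m)).congr (fun z => ?_) rfl).1
  simp only [pow_add, Finset.prod_mul_distrib, prod_dl]

lemma z4 (i j k l : Fin n) : HasE (stdG n) (fun z => z i * z j * z k * z l)
    ((if i = j then 1 else 0) * (if k = l then 1 else 0) +
     (if i = k then 1 else 0) * (if j = l then 1 else 0) +
     (if i = l then 1 else 0) * (if j = k then 1 else 0)) := by
  refine (mono_E (fun m => dl i m + dl j m + dl k m + dl l m)).congr (fun z => ?_) ?_
  · simp only [pow_add, Finset.prod_mul_distrib, prod_dl]
  symm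
  by_cases hij : i = j
  · subst hij
    by_cases hkl : k = l
    · subst hkl
      by_cases hik : i = k
      · subst hik
        rw [Finset.prod_eq_single i]
        · simp [dl, gm4]; norm_num
        · intro m _ hm; simp [dl, hm, gm0]
        · simp
      · rw [Finset.prod_eq_one]
        · simp [hik]
        · intro m _
          by_cases hm : m = i
          · subst hm; simp [dl, hik, gm2]
          · by_cases hm' : m = k
            · subst hm'; simp [dl, hm, gm2]
            · simp [dl, hm, hm', gm0]
    · by_cases hik : i = k
      · subst hik
        rw [Finset.prod_eq_zero (Finset.mem_univ l)]
        · simp [hkl]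
        · simp [dl, Ne.symm hkl, gm1]
      · rw [Finset.prod_eq_zero (Finset.mem_univ k)]
        · simp [hkl, hik]
        · simp [dl, hkl, Ne.symm hik, gm1]
  · by_cases hik : i = k
    · subst hik
      by_cases hjl : j = l
      · subst hjl
        rw [Finset.prod_eq_one]
        · simp [hij]
        · intro m _
          by_cases hm : m = i
          · subst hm; simp [dl, hij, gm2]
          · by_cases hm' : m = j
            · subst hm'; simp [dl, hm, gm2]
            · simp [dl, hm, hm', gm0]
      · by_cases hil : i = l
        · subst hil
          rw [Finset.prod_eq_zero (Finset.mem_univ j)]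
          · simp [hij, hjl]
          · simp [dl, hjl, gm1]
        · rw [Finset.prod_eq_zero (Finset.mem_univ l)]
          · simp [hij, hil, hjl]
          · simp [dl, Ne.symm hjl, Ne.symm hil, gm1]
    · by_cases hil : i = l
      · subst hil
        by_cases hjk : j = k
        · subst hjk
          rw [Finset.prod_eq_one]
          · simp [hij]
          · intro m _
            by_cases hm : m = i
            · subst hm; simp [dl, hij, gm2]
            · by_cases hm' : m = j
              · subst hm'; simp [dl, hm, gm2]
              · simp [dl, hm, hm', gm0]
        · rw [Finset.prod_eq_zero (Finset.mem_univ j)]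
          · simp [hij, hjk, hik]
          · simp [dl, hjk, Ne.symm hij, gm1]
      · rw [Finset.prod_eq_zero (Finset.mem_univ i)]
        · simp [hij, hik, hil]
        · simp [dl, hij, hik, hil, gm1]

lemma sum3 (f g h : Fin n → ℝ) : (∑ i, f i) * (∑ i, g i) * (∑ i, h i) =
    ∑ i, ∑ j, ∑ l, f i * g j * h l := by
  simp only [← Finset.mul_sum, ← Finset.sum_mul]

lemma sum4 (f g h k : Fin n → ℝ) : (∑ i, f i) * (∑ i, g i) * (∑ i, h i) * (∑ i, k i) =
    ∑ i, ∑ j, ∑ l, ∑ m, f i * g j * h l * k m := by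
  simp only [← Finset.mul_sum, ← Finset.sum_mul]

section transfer
variable {P : Measure Θ} [IsProbabilityMeasure P] {X ξ : Θ → Fin n → ℝ}
  {S T : Matrix (Fin n) (Fin n) ℝ}

lemma IsCenteredGaussian.aem (hX : IsCenteredGaussian P X S) : AEMeasurable X P := by
  obtain ⟨A, -, h⟩ := hX
  by_contra hc
  rw [Measure.map_of_not_aemeasurable hc] at h
  have hA : Measurable (fun z : Fin n → ℝ => A *ᵥ z) := by fun_prop
  have : IsProbabilityMeasure (Measure.map (fun z => A *ᵥ z) (stdG n)) :=
    Measure.isProbabilityMeasure_map hA.aemeasurable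
  exact IsProbabilityMeasure.ne_zero _ h.symm

lemma transfer (hX : AEMeasurable X P) (A : Matrix (Fin n) (Fin n) ℝ)
    (h : Measure.map X P = Measure.map (fun z => A *ᵥ z) (stdG n))
    (f : (Fin n → ℝ) → ℝ) (hf : Continuous f) {v : ℝ}
    (hv : HasE (stdG n) (fun z => f (A *ᵥ z)) v) : HasE P (fun θ => f (X θ)) v := by
  have hA : Measurable (fun z : Fin n → ℝ => A *ᵥ z) := by fun_prop
  constructor
  · have h1 : Integrable f (Measure.map X P) := by
      rw [h, integrable_map_measure hf.aestronglyMeasurable hA.aemeasurable]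
      exact hv.1
    exact (integrable_map_measure hf.aestronglyMeasurable hX).1 h1
  · rw [← integral_map hX hf.aestronglyMeasurable, h,
      integral_map hA.aemeasurable hf.aestronglyMeasurable]
    exact hv.2

lemma x1 (hX : IsCenteredGaussian P X S) (a : Fin n) : HasE P (fun θ => X θ a) 0 := by
  have hm := hX.aem
  obtain ⟨A, -, h⟩ := hX
  refine transfer hm A h (fun x => x a) (by fun_prop) ?_
  refine (HasE.sum Finset.univ fun i => (z1 i).const_mul (A a i)).congr (fun z => ?_) (by simp)
  simp [mulVec, dotProduct]

lemma x2 (hX : IsCenteredGaussian P X S) (a b : Fin n) :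
    HasE P (fun θ => X θ a * X θ b) (S a b) := by
  have hm := hX.aem
  obtain ⟨A, rfl, h⟩ := hX
  refine transfer hm A h (fun x => x a * x b) (by fun_prop) ?_
  refine (HasE.sum Finset.univ fun i => HasE.sum Finset.univ fun j =>
    (z2 i j).const_mul (A a i * A b j)).congr (fun z => ?_) ?_
  · simp only [mulVec, dotProduct, Finset.sum_mul_sum]
    refine Finset.sum_congr rfl fun i _ => Finset.sum_congr rfl fun j _ => ?_
    ring
  · simp [mul_apply]

lemma x3 (hX : IsCenteredGaussian P X S) (a b c : Fin n) :
    Integrable (fun θ => X θ a * X θ b * X θ c) P := by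
  have hm := hX.aem
  obtain ⟨A, rfl, h⟩ := hX
  refine (transfer hm A h (fun x => x a * x b * x c) (by fun_prop)
    (v := ∑ i, ∑ j, ∑ k, A a i * A b j * A c k * ∫ z, z i * z j * z k ∂(stdG n)) ?_).1
  refine (HasE.sum Finset.univ fun i => HasE.sum Finset.univ fun j => HasE.sum Finset.univ fun k =>
    HasE.const_mul (A a i * A b j * A c k) ⟨z3 i j k, rfl⟩).congr (fun z => ?_) rfl
  simp only [mulVec, dotProduct, sum3]
  refine Finset.sum_congr rfl fun i _ => Finset.sum_congr rfl fun j _ =>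
    Finset.sum_congr rfl fun k _ => ?_
  ring

lemma x4 (hX : IsCenteredGaussian P X S) (a b c d : Fin n) :
    HasE P (fun θ => X θ a * X θ b * X θ c * X θ d)
      (S a b * S c d + S a c * S b d + S a d * S b c) := by
  have hm := hX.aem
  obtain ⟨A, rfl, h⟩ := hX
  refine transfer hm A h (fun x => x a * x b * x c * x d) (by fun_prop) ?_
  refine (HasE.sum Finset.univ fun i => HasE.sum Finset.univ fun j => HasE.sum Finset.univ fun k =>
    HasE.sum Finset.univ fun l =>
    (z4 i j k l).const_mul (A a i * A b j * A c k * A d l)).congr (fun z => ?_) ?_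
  · simp only [mulVec, dotProduct, sum4]
    refine Finset.sum_congr rfl fun i _ => Finset.sum_congr rfl fun j _ =>
      Finset.sum_congr rfl fun k _ => Finset.sum_congr rfl fun l _ => ?_
    ring
  · simp only [mul_add, Finset.sum_add_distrib]
    simp only [mul_apply, transpose_apply, Finset.sum_mul_sum]
    congr 1
    · congr 1
      · simp [mul_assoc]
      · simp [mul_assoc, mul_left_comm]
    · simp [mul_assoc, mul_comm, mul_left_comm]

/-- product expectations of independent quantities -/
lemma indepE (hi : IndepFun X ξ P) (f g : (Fin n → ℝ) → ℝ) (hf : Continuous f) (hg : Continuous g) {v w : ℝ}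
    (hv : HasE P (fun θ => f (X θ)) v) (hw : HasE P (fun θ => g (ξ θ)) w) :
    HasE P (fun θ => f (X θ) * g (ξ θ)) (v * w) := by
  have h : IndepFun (fun θ => f (X θ)) (fun θ => g (ξ θ)) P := hi.comp hf.measurable hg.measurable
  refine ⟨h.integrable_mul hv.1 hw.1, ?_⟩
  rw [h.integral_fun_mul_eq_mul_integral hv.1.aestronglyMeasurable hw.1.aestronglyMeasurable,
    hv.2, hw.2]

lemma xxi (hX : IsCenteredGaussian P X S) (hξ : IsCenteredGaussian P ξ T)
    (hi : IndepFun X ξ P) (a b : Fin n) : HasE P (fun θ => X θ a * ξ θ b) 0 :=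
  (indepE hi (fun x => x a) (fun x => x b) (by fun_prop) (by fun_prop)
    (x1 hX a) (x1 hξ b)).congr (fun _ => rfl) (by simp)

lemma xxxxi (hX : IsCenteredGaussian P X S) (hξ : IsCenteredGaussian P ξ T)
    (hi : IndepFun X ξ P) (a b c d : Fin n) :
    HasE P (fun θ => X θ a * X θ b * X θ c * ξ θ d) 0 :=
  (indepE hi (fun x => x a * x b * x c) (fun x => x d) (by fun_prop) (by fun_prop)
    ⟨x3 hX a b c, rfl⟩ (x1 hξ d)).congr (fun _ => rfl) (by simp)

lemma xxxixi (hX : IsCenteredGaussian P X S) (hξ : IsCenteredGaussian P ξ T)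
    (hi : IndepFun X ξ P) (a b c d : Fin n) :
    HasE P (fun θ => X θ a * X θ b * (ξ θ c * ξ θ d)) (S a b * T c d) :=
  indepE hi (fun x => x a * x b) (fun x => x c * x d) (by fun_prop) (by fun_prop)
    (x2 hX a b) (x2 hξ c d)

end transfer

set_option maxHeartbeats 1600000 in
/-- for independent centered Gaussians `X ~ N(0,Σ_X)`, `ξ ~ N(0,Σ_ξ)` and any
`G`, with `c := X (Xᵀ G − ξᵀ)` and `C := 𝔼[c] = Σ_X G`, one has for every Hermitian `Q`:
`𝔼[c* Q c] − C* Q C = tr(Σ_X Q)(G* Σ_X G + Σ_ξ) + G* Σ_X Qᵀ Σ_X G`. -/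
theorem stmt14 (P : Measure Θ) [IsProbabilityMeasure P]
    (SX Sxi : Matrix (Fin n) (Fin n) ℝ)
    (hSX : SX.PosDef) (hSxi : Sxi.PosSemidef)
    (X ξ : Θ → Fin n → ℝ)
    (hX : IsCenteredGaussian P X SX) (hξ : IsCenteredGaussian P ξ Sxi)
    (hindep : IndepFun X ξ P)
    (G : Matrix (Fin n) (Fin n) ℂ) :
    -- the random matrix `c(θ) = X(θ)·(X(θ)ᵀ G − ξ(θ)ᵀ)` and its mean `C`
    (∀ cr : Θ → Matrix (Fin n) (Fin n) ℂ,
      (∀ θ i j, cr θ i j =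
        (X θ i : ℂ) * (Matrix.vecMul (fun k => (X θ k : ℂ)) G j - (ξ θ j : ℂ))) →
      Matrix.of (fun i j => ∫ θ, cr θ i j ∂P) = (SX.map (Complex.ofReal ·)) * G ∧
      ∀ Q : Matrix (Fin n) (Fin n) ℂ, Q.IsHermitian →
        Matrix.of (fun i j => ∫ θ, ((cr θ)ᴴ * Q * cr θ) i j ∂P)
          - ((SX.map (Complex.ofReal ·)) * G)ᴴ * Q * ((SX.map (Complex.ofReal ·)) * G)
        = Matrix.trace ((SX.map (Complex.ofReal ·)) * Q) •
            (Gᴴ * (SX.map (Complex.ofReal ·)) * G + (Sxi.map (Complex.ofReal ·)))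
          + Gᴴ * (SX.map (Complex.ofReal ·)) * Qᵀ * (SX.map (Complex.ofReal ·)) * G) := by
  intro cr hcr
  have hs : ∀ a b, SX a b = SX b a := fun a b => by
    have := congrFun (congrFun hSX.1 b) a
    simpa using this
  have hC : ∀ i j, ((SX.map (Complex.ofReal ·)) * G) i j = ∑ k, G k j * (SX i k : ℂ) := fun i j => by
    simp [mul_apply, mul_comm]
  refine ⟨?_, ?_⟩
  · ext i j
    rw [of_apply, hC]
    refine (((HasE.sum Finset.univ fun k => ((x2 hX i k).ofReal).const_mul (G k j)).sub
      (xxi hX hξ hindep i j).ofReal).congr (fun θ => ?_) (by simp)).2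
    rw [hcr]
    simp only [vecMul, dotProduct, mul_sub, Finset.mul_sum]
    push_cast
    congr 1
    exact Finset.sum_congr rfl fun k _ => by ring
  · intro Q _
    have hSH : (SX.map (Complex.ofReal ·))ᴴ = SX.map (Complex.ofReal ·) := by
      ext a b
      simp [hs a b]
    set C := (SX.map (Complex.ofReal ·)) * G with hCdef
    have h2 : Gᴴ * (SX.map (Complex.ofReal ·)) * Qᵀ * (SX.map (Complex.ofReal ·)) * G
        = Cᴴ * Qᵀ * C := by
      rw [hCdef, conjTranspose_mul, hSH]
      simp only [Matrix.mul_assoc]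
    rw [h2, sub_eq_iff_eq_add]
    ext i j
    have key : ∀ a b, HasE P
        (fun θ => star (cr θ a i) * cr θ b j)
        ((SX a b : ℂ) * ((Gᴴ * (SX.map (Complex.ofReal ·)) * G) i j + (Sxi i j : ℂ))
          + star (C a i) * C b j + C a j * star (C b i)) := by
      intro a b
      refine ((((HasE.sum Finset.univ fun k => HasE.sum Finset.univ fun l =>
          ((x4 hX a b k l).ofReal).const_mul (star (G k i) * G l j)).sub
        (HasE.sum Finset.univ fun k =>
          ((xxxxi hX hξ hindep a b k j).ofReal).const_mul (star (G k i)))).sub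
        (HasE.sum Finset.univ fun l =>
          ((xxxxi hX hξ hindep a b l i).ofReal).const_mul (G l j))).add
        (xxxixi hX hξ hindep a b i j).ofReal).congr (fun θ => ?_) ?_
      · rw [hcr, hcr]
        have e1 : star (vecMul (fun k => (X θ k : ℂ)) G i) = ∑ k, star (G k i) * (X θ k : ℂ) := by
          simp [vecMul, dotProduct, mul_comm]
        have e2 : vecMul (fun k => (X θ k : ℂ)) G j = ∑ l, G l j * (X θ l : ℂ) := by
          simp [vecMul, dotProduct, mul_comm]
        have e3 : ∀ r : ℝ, star (r : ℂ) = r := fun r => by simp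
        rw [star_mul, star_sub, e3, e3, e1, e2]
        have f1 : ∑ k, ∑ l, star (G k i) * G l j * ((X θ a * X θ b * X θ k * X θ l : ℝ) : ℂ)
            = (X θ a : ℂ) * X θ b * ((∑ k, star (G k i) * (X θ k : ℂ)) *
              (∑ l, G l j * (X θ l : ℂ))) := by
          rw [Finset.sum_mul_sum, Finset.mul_sum]
          refine Finset.sum_congr rfl fun k _ => ?_
          rw [Finset.mul_sum]
          refine Finset.sum_congr rfl fun l _ => ?_
          push_cast; ring
        have f2 : ∑ k, star (G k i) * ((X θ a * X θ b * X θ k * ξ θ j : ℝ) : ℂ)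
            = (X θ a : ℂ) * X θ b * ξ θ j * (∑ k, star (G k i) * (X θ k : ℂ)) := by
          rw [Finset.mul_sum]
          refine Finset.sum_congr rfl fun k _ => ?_
          push_cast; ring
        have f3 : ∑ l, G l j * ((X θ a * X θ b * X θ l * ξ θ i : ℝ) : ℂ)
            = (X θ a : ℂ) * X θ b * ξ θ i * (∑ l, G l j * (X θ l : ℂ)) := by
          rw [Finset.mul_sum]
          refine Finset.sum_congr rfl fun k _ => ?_
          push_cast; ring
        rw [f1, f2, f3]
        push_cast
        ring
      · have hCs : ∀ a, star (C a i) = ∑ k, star (G k i) * (SX a k : ℂ) := fun a => by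
          rw [hC]; simp
        have g1 : (Gᴴ * (SX.map (Complex.ofReal ·)) * G) i j =
            ∑ k, ∑ l, star (G k i) * G l j * (SX k l : ℂ) := by
          simp only [mul_apply, Finset.sum_mul]
          rw [Finset.sum_comm]
          refine Finset.sum_congr rfl fun k _ => Finset.sum_congr rfl fun l _ => ?_
          simp; ring
        rw [g1, hCs, hCs, hC, hC, mul_add, Finset.sum_mul_sum,
          mul_comm (∑ k, G k j * (SX a k : ℂ)), Finset.sum_mul_sum]
        simp only [Complex.ofReal_zero, mul_zero, Finset.sum_const_zero, sub_zero]
        push_cast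
        simp only [mul_add, Finset.sum_add_distrib, Finset.mul_sum]
        have : ∀ p q r s p' q' r' : ℂ, p = p' → q = q' → r = r' →
            p + q + r + s = p' + s + q' + r' := by
          rintro p q r s _ _ _ rfl rfl rfl; ring
        symm
        apply this <;>
          exact Finset.sum_congr rfl fun k _ => Finset.sum_congr rfl fun l _ => by ring
    have main := HasE.sum Finset.univ fun b => HasE.sum Finset.univ fun a => (key a b).const_mul (Q a b)
    have expand : ∀ (D : Matrix (Fin n) (Fin n) ℂ) (Q : Matrix (Fin n) (Fin n) ℂ),
        (Dᴴ * Q * D) i j = ∑ b, ∑ a, Q a b * (star (D a i) * D b j) := fun D Q => by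
      simp only [mul_apply, Finset.sum_mul, conjTranspose_apply]
      refine Finset.sum_congr rfl fun k _ => Finset.sum_congr rfl fun l _ => by ring
    rw [of_apply]
    refine (main.congr (fun θ => expand _ _) ?_).2
    rw [Matrix.add_apply, Matrix.add_apply, Matrix.smul_apply, Matrix.add_apply, expand C, expand C, smul_eq_mul, Matrix.map_apply]
    have ht : trace ((SX.map (Complex.ofReal ·)) * Q) = ∑ b, ∑ a, Q a b * (SX a b : ℂ) := by
      simp only [trace, diag_apply, mul_apply]
      refine Finset.sum_congr rfl fun k _ => Finset.sum_congr rfl fun l _ => ?_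
      rw [Matrix.map_apply, hs, mul_comm]
    have hT : ∑ b, ∑ a, Qᵀ a b * (star (C a i) * C b j) =
        ∑ b, ∑ a, Q a b * (C a j * star (C b i)) := by
      rw [Finset.sum_comm]
      refine Finset.sum_congr rfl fun k _ => Finset.sum_congr rfl fun l _ => ?_
      rw [transpose_apply]; ring
    rw [ht, hT]
    generalize (Gᴴ * (SX.map (Complex.ofReal ·)) * G) i j = g
    simp only [mul_add, Finset.sum_add_distrib, Finset.sum_mul, mul_assoc]
    ring

end
end

section
/- Let κ : ℤ → ℂ be finitely supported with κ(−ℓ) = conj(κ(ℓ)) for all ℓ, and suppose its Fourier series is nonnegative: Σ_ℓ κ(ℓ)·e^{iℓθ} is a nonnegative real number for every θ ∈ ℝ. Then for any M ≥ 1, any matrices B_1, …, B_M ∈ M_N, and any Hermitian positive semidefinite Q ∈ M_N, the matrix Σ_{m=1}^M Σ_{m'=1}^M κ(m − m')· B_m* Q B_{m'} is Hermitian positive semidefinite. -/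
open Matrix ComplexOrder

noncomputable section

lemma exp_sum_aux (K : ℕ) (hK : 0 < K) (n : ℤ) (hn : n.natAbs < K) :
    ∑ j ∈ Finset.range K, Complex.exp (Complex.I * (n : ℂ) * ((2 * Real.pi * j / K : ℝ) : ℂ))
      = if n = 0 then (K : ℂ) else 0 := by
  split_ifs with h
  · subst h; simp
  · have hp := Complex.isPrimitiveRoot_exp K hK.ne'
    set ω := Complex.exp (2 * Real.pi * Complex.I / K) with hω
    have hne : ω ^ n ≠ 1 := by
      intro h1
      have h2 := (hp.zpow_eq_one_iff_dvd n).1 h1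
      exact h (Int.eq_zero_of_abs_lt_dvd h2 (by rw [Int.abs_eq_natAbs]; exact_mod_cast hn))
    have e : ∀ j : ℕ, Complex.exp (Complex.I * (n : ℂ) * ((2 * Real.pi * j / K : ℝ) : ℂ))
        = (ω ^ n) ^ j := by
      intro j
      rw [hω, ← Complex.exp_int_mul, ← Complex.exp_nat_mul]
      congr 1
      push_cast
      ring
    simp_rw [e]
    rw [geom_sum_eq hne]
    have : (ω ^ n) ^ K = 1 := by
      rw [← zpow_natCast, ← _root_.zpow_mul, mul_comm, _root_.zpow_mul, zpow_natCast, hp.pow_eq_one, _root_.one_zpow]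
    simp [this]

/-- if `κ : ℤ → ℂ` is finitely supported, satisfies `κ(−ℓ) = conj(κ(ℓ))` and
has nonnegative Fourier series, then for any matrices `B_1,…,B_M` and any PSD `Q` the
matrix `Σ_{m,m'} κ(m−m') B_m* Q B_{m'}` is positive semidefinite. -/
theorem stmt15 {N : ℕ} (κ : ℤ → ℂ)
    (hsupp : (Function.support κ).Finite)
    (hherm : ∀ ℓ : ℤ, κ (-ℓ) = starRingEnd ℂ (κ ℓ))
    (hpos : ∀ θ : ℝ, ∃ r : ℝ, 0 ≤ r ∧
      (∑ᶠ ℓ : ℤ, κ ℓ * Complex.exp (Complex.I * (ℓ : ℂ) * (θ : ℂ))) = (r : ℂ))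
    (M : ℕ) (hM : 1 ≤ M) (B : Fin M → Matrix (Fin N) (Fin N) ℂ)
    (Q : Matrix (Fin N) (Fin N) ℂ) (hQ : Q.PosSemidef) :
    (∑ m : Fin M, ∑ m' : Fin M,
      κ ((m : ℤ) - (m' : ℤ)) • ((B m)ᴴ * Q * B m')).PosSemidef := by
  choose r hr0 hr using hpos
  set S := hsupp.toFinset with hS
  set K : ℕ := S.sup Int.natAbs + M + 1 with hKdef
  have hK : 0 < K := by omega
  have hKc : (K : ℂ) ≠ 0 := by exact_mod_cast hK.ne'
  have hr' : ∀ θ : ℝ, (r θ : ℂ) =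
      ∑ ℓ ∈ S, κ ℓ * Complex.exp (Complex.I * (ℓ : ℂ) * (θ : ℂ)) := by
    intro θ
    rw [← hr]
    apply finsum_eq_sum_of_support_subset
    intro x hx
    simp only [hS, Set.Finite.coe_toFinset, Function.mem_support] at hx ⊢
    exact left_ne_zero_of_mul hx
  let t : ℕ → ℝ := fun j => 2 * Real.pi * j / K
  have key : ∀ d : ℤ, d.natAbs < M → κ d =
      ∑ j ∈ Finset.range K, ((r (t j) / K : ℝ) : ℂ) *
        Complex.exp (-(Complex.I * (d : ℂ) * (t j : ℂ))) := by
    intro d hd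
    have h1 : ∀ j, ((r (t j) / K : ℝ) : ℂ) * Complex.exp (-(Complex.I * (d : ℂ) * (t j : ℂ)))
        = ∑ ℓ ∈ S, κ ℓ / K * Complex.exp (Complex.I * ((ℓ - d : ℤ) : ℂ) * (t j : ℂ)) := by
      intro j
      push_cast
      rw [hr', Finset.sum_div, Finset.sum_mul]
      refine Finset.sum_congr rfl fun ℓ _ => ?_
      have : Complex.I * ((ℓ : ℂ) - d) * (t j : ℂ) =
        Complex.I * (ℓ : ℂ) * (t j : ℂ) + -(Complex.I * (d : ℂ) * (t j : ℂ)) := by ring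
      rw [this, Complex.exp_add]
      ring
    simp_rw [h1]
    rw [Finset.sum_comm]
    have h2 : ∀ ℓ ∈ S, ∑ j ∈ Finset.range K,
        κ ℓ / K * Complex.exp (Complex.I * ((ℓ - d : ℤ) : ℂ) * (t j : ℂ))
        = if ℓ = d then κ d else 0 := by
      intro ℓ hℓ
      have hle : ℓ.natAbs ≤ S.sup Int.natAbs := Finset.le_sup (f := Int.natAbs) hℓ
      rw [← Finset.mul_sum, exp_sum_aux K hK (ℓ - d) (by omega)]
      by_cases h : ℓ = d
      · subst h; simp [hKc]
      · simp [h, sub_eq_zero]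
    rw [Finset.sum_congr rfl h2, Finset.sum_ite_eq']
    split_ifs with h
    · rfl
    · simpa [hS] using h
  let C : ℕ → Matrix (Fin N) (Fin N) ℂ := fun j =>
    ∑ m : Fin M, Complex.exp (Complex.I * ((m : ℕ) : ℂ) * (t j : ℂ)) • B m
  have main : (∑ m : Fin M, ∑ m' : Fin M,
      κ ((m : ℤ) - (m' : ℤ)) • ((B m)ᴴ * Q * B m')) =
      ∑ j ∈ Finset.range K, ((r (t j) / K : ℝ) : ℂ) • ((C j)ᴴ * Q * C j) := by
    have hC : ∀ j, ((r (t j) / K : ℝ) : ℂ) • ((C j)ᴴ * Q * C j) =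
        ∑ m : Fin M, ∑ m' : Fin M, (((r (t j) / K : ℝ) : ℂ) *
          Complex.exp (-(Complex.I * (((m : ℤ) - (m' : ℤ) : ℤ) : ℂ) * (t j : ℂ)))) •
            ((B m)ᴴ * Q * B m') := by
      intro j
      simp only [C, Matrix.conjTranspose_sum, Matrix.conjTranspose_smul, Finset.sum_mul,
        Finset.mul_sum, Finset.smul_sum]
      rw [Finset.sum_comm]
      refine Finset.sum_congr rfl fun m _ => Finset.sum_congr rfl fun m' _ => ?_
      simp only [Matrix.smul_mul, Matrix.mul_smul, smul_smul]
      congr 1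
      rw [mul_assoc]
      congr 1
      rw [Complex.star_def, ← Complex.exp_conj, ← Complex.exp_add]
      congr 1
      simp
      ring
    simp_rw [hC]
    symm
    rw [Finset.sum_comm]
    refine Finset.sum_congr rfl fun m _ => ?_
    rw [Finset.sum_comm]
    refine Finset.sum_congr rfl fun m' _ => ?_
    rw [← Finset.sum_smul, ← key _ (by omega)]
  rw [main]
  refine Matrix.posSemidef_sum _ fun j _ => ?_
  refine (hQ.conjTranspose_mul_mul_same (C j)).smul ?_
  exact_mod_cast div_nonneg (hr0 _) (Nat.cast_nonneg K)

end
end
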